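/- Let M be a nondeterministic finite automaton over a finite alphabet with finite state set, and suppose M is essential and has bounded ambiguity. Then there exist constants C ∈ ℕ and D > 0 such that for every n ≥ 1: |B_n(L(M))| ≤ |B_n(W(M))| ≤ (C+1) · D · max_{0 ≤ i ≤ C} |B_{n+i}(L(M))|, where B_n denotes the set of words of length n in the given language. -/

import Mathlib

/-!
A run of a word amounts to a path of edges with known end states, and the word is read off the
labels of the path; hence there are at least as many walks as words. For the upper bound, sort the
walks of length `n` by their end states `p` and `q`. As `M` is essential, a path `u` leads from an
initial state to `p` and a path `v` from `q` to a final state, so the walks `l` from `p` to `q`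
inject into the accepting paths `u ++ l ++ v`. The lengths of `u` and `v` depend only on `p` and
`q`, and the number of accepting paths that carry a given word is at most its ambiguity.
-/

/-- An accepting run of the word `w` in the NFA `M`: a sequence of `w.length + 1`
states starting in an initial state, ending in a final state, and following the
transition relation. -/
def AccRun {α σ : Type*} (M : NFA α σ) (w : List α) (r : Fin (w.length + 1) → σ) : Prop :=
  r 0 ∈ M.start ∧ r (Fin.last w.length) ∈ M.accept ∧
    ∀ i : Fin w.length, r i.succ ∈ M.step (r i.castSucc) (w.get i)

/-- The language accepted by the NFA `M`: words admitting at least one accepting run. -/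
def NLang {α σ : Type*} (M : NFA α σ) : Set (List α) :=
  {w | ∃ r, AccRun M w r}

/-- `M` is essential: every state occurs in some accepting run. -/
def Essential {α σ : Type*} (M : NFA α σ) : Prop :=
  ∀ q : σ, ∃ (w : List α) (r : Fin (w.length + 1) → σ), AccRun M w r ∧ ∃ i, r i = q

/-- `M` has bounded ambiguity: some constant `K` bounds the number of accepting runs
of every word. -/
def BoundedAmbiguity {α σ : Type*} (M : NFA α σ) : Prop :=
  ∃ K : ℕ, ∀ w : List α, Nat.card {r : Fin (w.length + 1) → σ // AccRun M w r} ≤ K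

/-- The edge set of the NFA `M`: triples `(p, x, q)` with `q ∈ δ(p, x)`. -/
def Edge {α σ : Type*} (M : NFA α σ) : Type _ :=
  {e : σ × α × σ // e.2.2 ∈ M.step e.1 e.2.1}

/-- The walk language of `M` over the alphabet of edges: sequences of edges in which
the target of each edge equals the source of the next. -/
def WLang {α σ : Type*} (M : NFA α σ) : Set (List (Edge M)) :=
  {l | l.Chain' fun e f => e.1.2.2 = f.1.1}

section Counting

variable {β γ : Type*}

/-- The set `B_n(L)` of words of length `n` in the language `L`. -/
def wordsOfLength (L : Set (List β)) (n : ℕ) : Set (List β) :=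
  {w | w ∈ L ∧ w.length = n}

lemma finite_wordsOfLength [Finite β] (L : Set (List β)) (n : ℕ) : (wordsOfLength L n).Finite :=
  (List.finite_length_eq β n).subset fun _ hw => hw.2

lemma ncard_le_mul_ncard_image {s : Set β} (hs : s.Finite) (f : β → γ) {K : ℕ}
    (hK : ∀ c ∈ f '' s, {b ∈ s | f b = c}.ncard ≤ K) : s.ncard ≤ K * (f '' s).ncard := by
  classical
  lift s to Finset β using hs
  rw [← Finset.coe_image, Set.ncard_coe_finset, Set.ncard_coe_finset]
  refine Finset.card_le_mul_card_image s K fun c hc => ?_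
  rw [← Set.ncard_coe_finset, Finset.coe_filter]
  exact hK c (by simpa only [Finset.coe_image] using Finset.mem_coe.2 hc)

end Counting

section Paths

variable {α σ : Type*} {M : NFA α σ}

instance Edge.instFinite [Finite α] [Finite σ] : Finite (Edge M) :=
  Subtype.finite

/-- The letter read along an edge. -/
def Edge.label (e : Edge M) : α := e.1.2.1

/-- A run of `w`: a sequence of states following the transitions of `M`, with no condition on its
first and last states. -/
def IsRun (M : NFA α σ) (w : List α) (r : Fin (w.length + 1) → σ) : Prop :=
  ∀ i : Fin w.length, r i.succ ∈ M.step (r i.castSucc) (w.get i)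

/-- `IsPath p l q`: the edges in `l` form a path from the state `p` to the state `q`. The end states
are recorded because an empty list of edges does not determine them. -/
def IsPath : σ → List (Edge M) → σ → Prop
  | p, [], q => p = q
  | p, e :: l, q => e.1.1 = p ∧ IsPath e.1.2.2 l q

lemma AccRun.isRun {w : List α} {r : Fin (w.length + 1) → σ} (hr : AccRun M w r) : IsRun M w r :=
  hr.2.2

namespace IsRun

variable {w : List α} {r : Fin (w.length + 1) → σ}

/-- The edge crossed by a run at the position `i`. -/
def edge (hr : IsRun M w r) (i : Fin w.length) : Edge M :=
  ⟨(r i.castSucc, w.get i, r i.succ), hr i⟩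

/-- The list of edges crossed by a run. -/
def edges (hr : IsRun M w r) : List (Edge M) :=
  List.ofFn hr.edge

lemma map_label_edges (hr : IsRun M w r) : hr.edges.map Edge.label = w := by
  rw [edges, List.map_ofFn]
  exact List.ofFn_get w

lemma edges_mem_WLang (hr : IsRun M w r) : hr.edges ∈ WLang M :=
  List.isChain_ofFn.2 fun _ _ => rfl

lemma cons {e : Edge M} (he : e.1.2.2 = r 0) (hr : IsRun M w r) :
    IsRun M (e.label :: w) (Fin.cons e.1.1 r) :=
  Fin.cases (show r 0 ∈ M.step e.1.1 e.1.2.1 from he ▸ e.2) hr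

lemma edges_cons {e : Edge M} (he : e.1.2.2 = r 0) (hr : IsRun M w r) :
    (hr.cons he).edges = e :: hr.edges := by
  have hzero : (hr.cons he).edge 0 = e := Subtype.ext (Prod.ext rfl (Prod.ext rfl he.symm))
  exact List.ofFn_succ.trans (congrArg (· :: hr.edges) hzero)

end IsRun

namespace IsPath

variable {p q s t : σ} {l m : List (Edge M)}

lemma append (hl : IsPath p l q) (hm : IsPath q m t) : IsPath p (l ++ m) t := by
  induction l generalizing p with
  | nil => obtain rfl : p = q := hl; exact hm
  | cons e l ih => exact ⟨hl.1, ih hl.2⟩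

lemma exists_isRun (hl : IsPath p l q) :
    ∃ r, ∃ hr : IsRun M (l.map Edge.label) r,
      r 0 = p ∧ r (Fin.last _) = q ∧ hr.edges = l := by
  induction l generalizing p with
  | nil => exact ⟨fun _ => p, fun i => i.elim0, rfl, hl, rfl⟩
  | cons e l ih =>
    obtain ⟨r, hr, hzero, hlast, hedges⟩ := ih hl.2
    exact ⟨_, hr.cons hzero.symm, hl.1, hlast, by rw [hr.edges_cons hzero.symm, hedges]⟩

lemma exists_accRun {w : List α} (hl : IsPath s l t) (hs : s ∈ M.start) (ht : t ∈ M.accept)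
    (hw : l.map Edge.label = w) :
    ∃ r : {r : Fin (w.length + 1) → σ // AccRun M w r}, r.2.isRun.edges = l := by
  subst hw
  obtain ⟨r, hr, rfl, rfl, hedges⟩ := hl.exists_isRun
  exact ⟨⟨r, hs, ht, hr⟩, hedges⟩

end IsPath

lemma exists_isPath_of_mem_WLang {e : Edge M} {l : List (Edge M)} (hl : e :: l ∈ WLang M) :
    ∃ q, IsPath e.1.1 (e :: l) q := by
  induction l generalizing e with
  | nil => exact ⟨_, rfl, rfl⟩
  | cons f l ih =>
    obtain ⟨hef, hfl⟩ := List.isChain_cons_cons.1 hl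
    obtain ⟨q, hq⟩ := ih hfl
    exact ⟨q, rfl, hef.symm ▸ hq⟩

namespace IsRun

variable {w : List α} {r : Fin (w.length + 1) → σ}

lemma exists_isPath_from_first (hr : IsRun M w r) (i : Fin (w.length + 1)) :
    ∃ u : List (Edge M), IsPath (r 0) u (r i) := by
  induction i using Fin.induction with
  | zero => exact ⟨[], rfl⟩
  | succ i ih =>
    obtain ⟨u, hu⟩ := ih
    exact ⟨u ++ [hr.edge i], hu.append ⟨rfl, rfl⟩⟩

lemma exists_isPath_to_last (hr : IsRun M w r) (i : Fin (w.length + 1)) :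
    ∃ v : List (Edge M), IsPath (r i) v (r (Fin.last _)) := by
  induction i using Fin.reverseInduction with
  | last => exact ⟨[], rfl⟩
  | cast i ih =>
    obtain ⟨v, hv⟩ := ih
    exact ⟨hr.edge i :: v, rfl, hv⟩

end IsRun

lemma Essential.exists_isPath_from_start (hM : Essential M) (q : σ) :
    ∃ s ∈ M.start, ∃ u : List (Edge M), IsPath s u q := by
  obtain ⟨w, r, hr, i, rfl⟩ := hM q
  exact ⟨r 0, hr.1, hr.isRun.exists_isPath_from_first i⟩

lemma Essential.exists_isPath_to_accept (hM : Essential M) (q : σ) :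
    ∃ t ∈ M.accept, ∃ v : List (Edge M), IsPath q v t := by
  obtain ⟨w, r, hr, i, rfl⟩ := hM q
  exact ⟨r (Fin.last _), hr.2.1, hr.isRun.exists_isPath_to_last i⟩

lemma ncard_words_le_ncard_walks [Finite α] [Finite σ] (M : NFA α σ) (n : ℕ) :
    (wordsOfLength (NLang M) n).ncard ≤ (wordsOfLength (WLang M) n).ncard := by
  have hwalks := finite_wordsOfLength (WLang M) n
  have himage : wordsOfLength (NLang M) n ⊆ List.map Edge.label '' wordsOfLength (WLang M) n := by
    rintro w ⟨⟨r, hr⟩, hw⟩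
    have hlabel := hr.isRun.map_label_edges
    refine ⟨hr.isRun.edges, ⟨hr.isRun.edges_mem_WLang, ?_⟩, hlabel⟩
    rw [← hw, ← List.length_map Edge.label, hlabel]
  exact (Set.ncard_le_ncard himage (hwalks.image _)).trans (Set.ncard_image_le hwalks)

/-- The number of paths of length `n` from `p` to `q`. -/
noncomputable def pathCount (M : NFA α σ) (p q : σ) (n : ℕ) : ℕ :=
  (wordsOfLength {l : List (Edge M) | IsPath p l q} n).ncard

lemma ncard_walks_le_sum_pathCount [Finite α] [Fintype σ] (M : NFA α σ) {n : ℕ} (hn : 1 ≤ n) :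
    (wordsOfLength (WLang M) n).ncard ≤ ∑ pq : σ × σ, pathCount M pq.1 pq.2 n := by
  have hcover : wordsOfLength (WLang M) n ⊆
      ⋃ pq : σ × σ, wordsOfLength {l : List (Edge M) | IsPath pq.1 l pq.2} n := by
    rintro (_ | ⟨e, l⟩) ⟨hl, rfl⟩
    · simp at hn
    · obtain ⟨q, hq⟩ := exists_isPath_of_mem_WLang hl
      exact Set.mem_iUnion.2 ⟨(e.1.1, q), hq, rfl⟩
  exact (Set.ncard_le_ncard hcover (Set.finite_iUnion fun _ => finite_wordsOfLength _ n)).trans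
    (Set.ncard_iUnion_le_of_fintype _)

lemma pathCount_le_pathCount_add [Finite α] [Finite σ] {s p q t : σ} {u v : List (Edge M)}
    (hu : IsPath s u p) (hv : IsPath q v t) (n : ℕ) :
    pathCount M p q n ≤ pathCount M s t (n + (u.length + v.length)) := by
  refine Set.ncard_le_ncard_of_injOn (fun l => u ++ l ++ v) ?_ ?_ (finite_wordsOfLength _ _)
  · rintro l ⟨hl, rfl⟩
    exact ⟨(hu.append hl).append hv, by grind⟩
  · intro l _ m _ h
    exact List.append_cancel_left (List.append_cancel_right h)

lemma pathCount_le_mul_ncard_words [Finite α] [Finite σ] {K : ℕ}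
    (hK : ∀ w : List α, Nat.card {r : Fin (w.length + 1) → σ // AccRun M w r} ≤ K)
    {s t : σ} (hs : s ∈ M.start) (ht : t ∈ M.accept) (n : ℕ) :
    pathCount M s t n ≤ K * (wordsOfLength (NLang M) n).ncard := by
  let P := wordsOfLength {l : List (Edge M) | IsPath s l t} n
  have hwords : List.map Edge.label '' P ⊆ wordsOfLength (NLang M) n := by
    rintro _ ⟨l, ⟨hl, hlength⟩, rfl⟩
    obtain ⟨⟨r, hr⟩, -⟩ := hl.exists_accRun hs ht rfl
    exact ⟨⟨r, hr⟩, by rw [List.length_map, hlength]⟩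
  have hfiber (w : List α) : {l ∈ P | l.map Edge.label = w}.ncard ≤ K := by
    let edgesOf (r : {r // AccRun M w r}) : List (Edge M) := r.2.isRun.edges
    have hrange : {l ∈ P | l.map Edge.label = w} ⊆ Set.range edgesOf :=
      fun l hl => hl.1.1.exists_accRun hs ht hl.2
    calc {l ∈ P | l.map Edge.label = w}.ncard
      _ ≤ (Set.range edgesOf).ncard := Set.ncard_le_ncard hrange
      _ ≤ Nat.card {r // AccRun M w r} := Finite.card_range_le edgesOf
      _ ≤ K := hK w
  exact (ncard_le_mul_ncard_image (finite_wordsOfLength _ n) _ fun w _ => hfiber w).trans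
    (Nat.mul_le_mul_left K (Set.ncard_le_ncard hwords (finite_wordsOfLength _ n)))

lemma exists_pathCount_le [Finite α] [Finite σ] (hM : Essential M) {K : ℕ}
    (hK : ∀ w : List α, Nat.card {r : Fin (w.length + 1) → σ // AccRun M w r} ≤ K) (p q : σ) :
    ∃ c, ∀ n, pathCount M p q n ≤ K * (wordsOfLength (NLang M) (n + c)).ncard := by
  obtain ⟨s, hs, u, hu⟩ := hM.exists_isPath_from_start p
  obtain ⟨t, ht, v, hv⟩ := hM.exists_isPath_to_accept q
  exact ⟨u.length + v.length, fun n =>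
    (pathCount_le_pathCount_add hu hv n).trans (pathCount_le_mul_ncard_words hK hs ht _)⟩

end Paths

/-- If a finite NFA `M` is essential and has bounded ambiguity, then there are constants
`C ∈ ℕ` and `D > 0` such that for every `n ≥ 1`:
`|B_n(L(M))| ≤ |B_n(W(M))| ≤ (C+1)·D·max_{0 ≤ i ≤ C} |B_{n+i}(L(M))|`. -/
theorem counting_walks_vs_words {α σ : Type*} [Fintype α] [Fintype σ] (M : NFA α σ)
    (hess : Essential M) (hamb : BoundedAmbiguity M) :
    ∃ (C D : ℕ), 0 < D ∧ ∀ n : ℕ, 1 ≤ n →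
      Nat.card {w : List α // w ∈ NLang M ∧ w.length = n} ≤
          Nat.card {l : List (Edge M) // l ∈ WLang M ∧ l.length = n} ∧
        Nat.card {l : List (Edge M) // l ∈ WLang M ∧ l.length = n} ≤
          (C + 1) * D *
            (Finset.range (C + 1)).sup
              (fun i => Nat.card {w : List α // w ∈ NLang M ∧ w.length = n + i}) := by
  obtain ⟨K, hK⟩ := hamb
  choose c hc using fun pq : σ × σ => exists_pathCount_le hess hK pq.1 pq.2
  let C : ℕ := Finset.univ.sup c
  refine ⟨C, Fintype.card (σ × σ) * K + 1, Nat.succ_pos _, fun n hn =>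
    ⟨ncard_words_le_ncard_walks M n, ?_⟩⟩
  let b (i : ℕ) : ℕ := (wordsOfLength (NLang M) (n + i)).ncard
  let S : ℕ := (Finset.range (C + 1)).sup b
  have hmax (pq : σ × σ) : b (c pq) ≤ S :=
    Finset.le_sup (Finset.mem_range_succ_iff.2 (Finset.le_sup (Finset.mem_univ pq)))
  have hpaths (pq : σ × σ) : pathCount M pq.1 pq.2 n ≤ K * S :=
    (hc pq n).trans (Nat.mul_le_mul_left K (hmax pq))
  calc (wordsOfLength (WLang M) n).ncard
    _ ≤ ∑ pq : σ × σ, pathCount M pq.1 pq.2 n := ncard_walks_le_sum_pathCount M hn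
    _ ≤ Fintype.card (σ × σ) * (K * S) := Finset.sum_le_card_nsmul _ _ _ fun pq _ => hpaths pq
    _ ≤ (C + 1) * (Fintype.card (σ × σ) * K + 1) * S := by
      rw [← mul_assoc]
      exact Nat.mul_le_mul_right S ((Nat.le_succ _).trans (Nat.le_mul_of_pos_left _ C.succ_pos))
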